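/- Let d, m ≥ 1, let I : ℝ^d → ℝ be differentiable with gradient ∇I(x) ≠ 0 for every x ∈ ℝ^d, and let f, g_1, …, g_m : ℝ^d → ℝ^d be vector fields satisfying ∇I(x)ᵀ f(x) = 0 and ∇I(x)ᵀ g_r(x) = 0 for all x ∈ ℝ^d and all r = 1,…,m. Then there exist matrix-valued functions S, T_1, …, T_m : ℝ^d → ℝ^{d×d} such that for every x ∈ ℝ^d the matrices S(x) and T_r(x) are skew-symmetric, S(x)∇I(x) = f(x), and T_r(x)∇I(x) = g_r(x) for all r = 1,…,m (the skew-gradient form of the SDE dX = f(X)dt + Σ_r g_r(X)∘dW_r with conserved quantity I). -/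

import Mathlib

open scoped RealInnerProductSpace
open Matrix

section WedgeMatrix

variable {n R : Type*} [CommRing R]

/-- The matrix `w vᵀ - v wᵀ` of the bivector `v ∧ w`. The sign is chosen so that it carries `v` to
a positive multiple of `w` when `v` and `w` are orthogonal real vectors and `v ≠ 0`; rescaled, it
is the skew-symmetric matrix sought at each point. -/
def wedgeMatrix (v w : n → R) : Matrix n n R :=
  vecMulVec w v - vecMulVec v w

theorem transpose_wedgeMatrix (v w : n → R) : (wedgeMatrix v w)ᵀ = -wedgeMatrix v w := by
  simp only [wedgeMatrix, transpose_sub, transpose_vecMulVec, neg_sub]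

variable [Fintype n]

theorem wedgeMatrix_mulVec (v w u : n → R) :
    wedgeMatrix v w *ᵥ u = (v ⬝ᵥ u) • w - (w ⬝ᵥ u) • v := by
  simp only [wedgeMatrix, sub_mulVec, vecMulVec_mulVec, op_smul_eq_smul]

theorem wedgeMatrix_mulVec_self_of_dotProduct_eq_zero {v w : n → R} (hvw : v ⬝ᵥ w = 0) :
    wedgeMatrix v w *ᵥ v = (v ⬝ᵥ v) • w := by
  rw [wedgeMatrix_mulVec, dotProduct_comm w v, hvw, zero_smul, sub_zero]

end WedgeMatrix

theorem exists_transpose_eq_neg_and_mulVec_eq {n K : Type*} [Fintype n] [Field K] [LinearOrder K]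
    [IsStrictOrderedRing K] {v w : n → K} (hvw : v ⬝ᵥ w = 0) (hw : v = 0 → w = 0) :
    ∃ S : Matrix n n K, Sᵀ = -S ∧ S *ᵥ v = w := by
  by_cases hv : v = 0
  · exact ⟨0, by simp, by simp [hv, hw hv]⟩
  · have hvv : v ⬝ᵥ v ≠ 0 := dotProduct_self_eq_zero.not.mpr hv
    refine ⟨(v ⬝ᵥ v)⁻¹ • wedgeMatrix v w, ?_, ?_⟩
    · rw [transpose_smul, transpose_wedgeMatrix, smul_neg]
    · rw [smul_mulVec, wedgeMatrix_mulVec_self_of_dotProduct_eq_zero hvw, inv_smul_smul₀ hvv]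

theorem exists_transpose_eq_neg_and_toLp_mulVec_eq {n : Type*} [Fintype n]
    {v w : EuclideanSpace ℝ n} (hvw : ⟪v, w⟫ = 0) (hw : v = 0 → w = 0) :
    ∃ S : Matrix n n ℝ, Sᵀ = -S ∧ WithLp.toLp 2 (S *ᵥ v.ofLp) = w := by
  have hdot : v.ofLp ⬝ᵥ w.ofLp = 0 := by
    simpa [EuclideanSpace.inner_eq_star_dotProduct, dotProduct_comm] using hvw
  obtain ⟨S, hS, hSv⟩ := exists_transpose_eq_neg_and_mulVec_eq hdot (by simpa using hw)
  exact ⟨S, hS, by rw [hSv]⟩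

theorem skew_gradient_form_general {X n ι : Type*} [Fintype n]
    (V f : X → EuclideanSpace ℝ n) (g : ι → X → EuclideanSpace ℝ n)
    (hf : ∀ x, ⟪V x, f x⟫ = 0) (hg : ∀ r x, ⟪V x, g r x⟫ = 0)
    (hf₀ : ∀ x, V x = 0 → f x = 0) (hg₀ : ∀ r x, V x = 0 → g r x = 0) :
    ∃ (S : X → Matrix n n ℝ) (T : ι → X → Matrix n n ℝ), ∀ x,
      ((S x)ᵀ = -S x ∧ WithLp.toLp 2 (S x *ᵥ (V x).ofLp) = f x) ∧
      ∀ r, (T r x)ᵀ = -T r x ∧ WithLp.toLp 2 (T r x *ᵥ (V x).ofLp) = g r x := by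
  choose S hS using fun x => exists_transpose_eq_neg_and_toLp_mulVec_eq (hf x) (hf₀ x)
  choose T hT using fun r x => exists_transpose_eq_neg_and_toLp_mulVec_eq (hg r x) (hg₀ r x)
  exact ⟨S, T, fun x => ⟨hS x, fun r => hT r x⟩⟩

/-- Skew-gradient form: an SDE `dX = f(X)dt + Σ_r g_r(X)∘dW_r` with conserved quantity `I`
can be written with skew-symmetric matrix functions `S`, `T r` such that
`S x ∇I x = f x` and `T r x ∇I x = g r x`. -/
theorem skew_gradient_form (d m : ℕ) (hd : 1 ≤ d) (hm : 1 ≤ m)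
    (I : EuclideanSpace ℝ (Fin d) → ℝ) (hI : Differentiable ℝ I)
    (hgrad : ∀ x, gradient I x ≠ 0)
    (f : EuclideanSpace ℝ (Fin d) → EuclideanSpace ℝ (Fin d))
    (g : Fin m → EuclideanSpace ℝ (Fin d) → EuclideanSpace ℝ (Fin d))
    (hf : ∀ x, ⟪gradient I x, f x⟫ = 0)
    (hg : ∀ (r : Fin m) (x : EuclideanSpace ℝ (Fin d)), ⟪gradient I x, g r x⟫ = 0) :
    ∃ (S : EuclideanSpace ℝ (Fin d) → Matrix (Fin d) (Fin d) ℝ)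
      (T : Fin m → EuclideanSpace ℝ (Fin d) → Matrix (Fin d) (Fin d) ℝ),
      ∀ x : EuclideanSpace ℝ (Fin d),
        ((S x)ᵀ = -(S x) ∧
          (WithLp.equiv 2 (Fin d → ℝ)).symm
            ((S x).mulVec (WithLp.equiv 2 (Fin d → ℝ) (gradient I x))) = f x) ∧
        ∀ r : Fin m, (T r x)ᵀ = -(T r x) ∧
          (WithLp.equiv 2 (Fin d → ℝ)).symm
            ((T r x).mulVec (WithLp.equiv 2 (Fin d → ℝ) (gradient I x))) = g r x := by
  exact skew_gradient_form_general (gradient I) f g hf hg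
    (fun x h => absurd h (hgrad x)) (fun _ x h => absurd h (hgrad x))
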